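/- Let (X,d) be a metric space, and let α : [0,∞) → [1,∞) and β : [0,∞) → [0,1) be such that there is a bounded function γ : (0,1] → [0,∞) with lim_{s→0⁺} γ(s) = 0 such that p(s) = s − (1−s)·γ(s) is essentially positive on (0,1] and α(t) ≤ 1 + γ(1−β(t)) for all t ≥ 0. Let F map X into nonempty closed subsets of X and let (x_n) be a sequence with x_{n+1} ∈ F(x_n) satisfying, with d_n = d(x_n,x_{n+1}): d_n ≤ α(d_n)·d_F(x_n) and d_F(x_{n+1}) ≤ β(d_n)·d_n for all n. Then d_F(x_{n+1}) ≤ (1 − p(1−β(d_n)))·d_F(x_n) ≤ d_F(x_n) for all n; in particular the sequence (d_F(x_n)) is nonincreasing and converges to a nonnegative limit. -/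

import Mathlib

open Filter Metric Set Topology

/-- Essential positivity of `h` on `S`: a positive lower bound on `S ∩ [a, ∞)` for every `a > 0`.
The infimum is replaced by an explicit bound `m`, as `sInf` of an empty set of reals would be `0`;
the part of `S` outside `(0, ∞)` is ignored. -/
def EssentiallyPositiveOn (h : ℝ → ℝ) (S : Set ℝ) : Prop :=
  ∀ a > (0 : ℝ), ∃ m > (0 : ℝ), ∀ s ∈ S, a ≤ s → m ≤ h s

theorem EssentiallyPositiveOn.pos {h : ℝ → ℝ} {S : Set ℝ} (hh : EssentiallyPositiveOn h S)
    {s : ℝ} (hs : s ∈ S) (hs_pos : 0 < s) : 0 < h s := by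
  obtain ⟨m, hm_pos, hm⟩ := hh s hs_pos
  exact hm_pos.trans_le (hm s hs le_rfl)

/-- The function `p` of the paper. When `s = 1 - β`, the number `1 - p(s)` is the product of the
factor `β` with the bound `1 + γ(s)` imposed on `α`; `p(s)` is thus the relative decrease of `d_F`
guaranteed along one step of the sequence. -/
def decreaseRate (γ : ℝ → ℝ) (s : ℝ) : ℝ :=
  s - (1 - s) * γ s

theorem one_sub_decreaseRate_one_sub (γ : ℝ → ℝ) (b : ℝ) :
    1 - decreaseRate γ (1 - b) = b * (1 + γ (1 - b)) := by
  unfold decreaseRate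
  ring

theorem le_one_sub_decreaseRate_mul {γ : ℝ → ℝ} {a b d D D' : ℝ} (hb : 0 ≤ b) (hD : 0 ≤ D)
    (ha : a ≤ 1 + γ (1 - b)) (hd : d ≤ a * D) (hD' : D' ≤ b * d) :
    D' ≤ (1 - decreaseRate γ (1 - b)) * D :=
  calc
    D' ≤ b * d := hD'
    _ ≤ b * (a * D) := by gcongr
    _ ≤ b * ((1 + γ (1 - b)) * D) := by gcongr
    _ = (1 - decreaseRate γ (1 - b)) * D := by rw [one_sub_decreaseRate_one_sub, mul_assoc]

theorem exists_ge_tendsto_atTop_of_antitone {ι R : Type*} [Preorder ι] [Nonempty ι]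
    [ConditionallyCompleteLattice R] [TopologicalSpace R] [InfConvergenceClass R]
    {u : ι → R} {c : R} (hu : Antitone u) (hc : ∀ i, c ≤ u i) :
    ∃ L, c ≤ L ∧ Tendsto u atTop (𝓝 L) :=
  ⟨⨅ i, u i, le_ciInf hc, tendsto_atTop_ciInf hu ⟨c, forall_mem_range.2 hc⟩⟩

theorem distance_sequence_decreasing_general {X : Type*} [PseudoMetricSpace X]
    (α β γ : ℝ → ℝ)
    (hβ : ∀ t, 0 ≤ t → β t ∈ Ico (0 : ℝ) 1)
    (hp : ∀ s ∈ Ioc (0 : ℝ) 1, 0 ≤ decreaseRate γ s)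
    (hαγ : ∀ t, 0 ≤ t → α t ≤ 1 + γ (1 - β t))
    (F : X → Set X) (_hFne : ∀ x, (F x).Nonempty) (x : ℕ → X)
    (hA : ∀ n, dist (x n) (x (n + 1)) ≤
      α (dist (x n) (x (n + 1))) * infDist (x n) (F (x n)))
    (hB : ∀ n, infDist (x (n + 1)) (F (x (n + 1))) ≤
      β (dist (x n) (x (n + 1))) * dist (x n) (x (n + 1))) :
    (∀ n, infDist (x (n + 1)) (F (x (n + 1))) ≤
        (1 - decreaseRate γ (1 - β (dist (x n) (x (n + 1))))) * infDist (x n) (F (x n)) ∧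
      (1 - decreaseRate γ (1 - β (dist (x n) (x (n + 1))))) * infDist (x n) (F (x n)) ≤
        infDist (x n) (F (x n))) ∧
    Antitone (fun n ↦ infDist (x n) (F (x n))) ∧
    ∃ L : ℝ, 0 ≤ L ∧ Tendsto (fun n ↦ infDist (x n) (F (x n))) atTop (𝓝 L) := by
  have contraction (n : ℕ) : infDist (x (n + 1)) (F (x (n + 1))) ≤
      (1 - decreaseRate γ (1 - β (dist (x n) (x (n + 1))))) * infDist (x n) (F (x n)) :=
    le_one_sub_decreaseRate_mul (hβ _ dist_nonneg).1 infDist_nonneg (hαγ _ dist_nonneg)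
      (hA n) (hB n)
  have factor_le_one (n : ℕ) : 1 - decreaseRate γ (1 - β (dist (x n) (x (n + 1)))) ≤ 1 := by
    obtain ⟨β_nonneg, β_lt_one⟩ := hβ (dist (x n) (x (n + 1))) dist_nonneg
    exact sub_le_self 1 (hp _ ⟨sub_pos.2 β_lt_one, sub_le_self 1 β_nonneg⟩)
  have bound_le (n : ℕ) : (1 - decreaseRate γ (1 - β (dist (x n) (x (n + 1))))) *
      infDist (x n) (F (x n)) ≤ infDist (x n) (F (x n)) :=
    mul_le_of_le_one_left infDist_nonneg (factor_le_one n)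
  have antitone_infDist : Antitone (fun n ↦ infDist (x n) (F (x n))) :=
    antitone_nat_of_succ_le fun n ↦ (contraction n).trans (bound_le n)
  exact ⟨fun n ↦ ⟨contraction n, bound_le n⟩, antitone_infDist,
    exists_ge_tendsto_atTop_of_antitone antitone_infDist fun _ ↦ infDist_nonneg⟩

/-- **Lemma 2.4.** For a sequence as in Lemma 2.3, with `p(s) = s - (1-s)·γ(s)` one has
`d_F(x_{n+1}) ≤ (1 - p(1 - β(dₙ))) · d_F(xₙ) ≤ d_F(xₙ)`; in particular the sequence
`(d_F(xₙ))` is nonincreasing and converges to a nonnegative limit. -/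
theorem distance_sequence_decreasing
    {X : Type*} [MetricSpace X]
    (α β : ℝ → ℝ)
    (hα : ∀ t, 0 ≤ t → 1 ≤ α t)
    (hβ : ∀ t, 0 ≤ t → β t ∈ Set.Ico (0 : ℝ) 1)
    -- the control function γ
    (γ : ℝ → ℝ)
    (hγnonneg : ∀ s ∈ Set.Ioc (0 : ℝ) 1, 0 ≤ γ s)
    (hγbdd : ∃ M : ℝ, ∀ s ∈ Set.Ioc (0 : ℝ) 1, γ s ≤ M)
    (hγlim : Filter.Tendsto γ (nhdsWithin 0 (Set.Ioc (0 : ℝ) 1)) (nhds 0))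
    -- p(s) = s - (1-s)γ(s) is essentially positive on (0,1]
    (hp : ∀ a > (0 : ℝ), ∃ m > (0 : ℝ), ∀ s ∈ Set.Ioc (0 : ℝ) 1, a ≤ s →
      m ≤ s - (1 - s) * γ s)
    (hαγ : ∀ t, 0 ≤ t → α t ≤ 1 + γ (1 - β t))
    (F : X → Set X)
    (hFne : ∀ x, (F x).Nonempty) (hFcl : ∀ x, IsClosed (F x))
    (x : ℕ → X)
    (horbit : ∀ n : ℕ, x (n + 1) ∈ F (x n))
    (hA : ∀ n : ℕ, dist (x n) (x (n + 1)) ≤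
      α (dist (x n) (x (n + 1))) * Metric.infDist (x n) (F (x n)))
    (hB : ∀ n : ℕ, Metric.infDist (x (n + 1)) (F (x (n + 1))) ≤
      β (dist (x n) (x (n + 1))) * dist (x n) (x (n + 1))) :
    (∀ n : ℕ,
      Metric.infDist (x (n + 1)) (F (x (n + 1))) ≤
        (1 - ((1 - β (dist (x n) (x (n + 1)))) -
          (1 - (1 - β (dist (x n) (x (n + 1))))) *
            γ (1 - β (dist (x n) (x (n + 1)))))) *
          Metric.infDist (x n) (F (x n)) ∧
      (1 - ((1 - β (dist (x n) (x (n + 1)))) -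
          (1 - (1 - β (dist (x n) (x (n + 1))))) *
            γ (1 - β (dist (x n) (x (n + 1)))))) *
          Metric.infDist (x n) (F (x n)) ≤ Metric.infDist (x n) (F (x n))) ∧
    Antitone (fun n : ℕ => Metric.infDist (x n) (F (x n))) ∧
    ∃ L : ℝ, 0 ≤ L ∧
      Filter.Tendsto (fun n : ℕ => Metric.infDist (x n) (F (x n)))
        Filter.atTop (nhds L) := by
  have hp_ess : EssentiallyPositiveOn (decreaseRate γ) (Ioc 0 1) := hp
  exact distance_sequence_decreasing_general α β γ hβ (fun _ hs ↦ (hp_ess.pos hs hs.1).le) hαγ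
    F hFne x hA hB
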